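/- arXiv:math/0606401 — 3 statements merged into one kernel-verified Lean document; each statement's English description precedes it below -/
import Mathlib

section
/- Fix integers n, k ≥ 1, and let A be a connection form on ℝⁿ with curvature F. For every smooth map Φ : ℝⁿ → ℝᵏ, every index b and every point x, (M^D(DΦ))_b(x) = Σ_a (D_a F_{ba})(x) Φ(x), where DΦ is the 1-form with components (DΦ)_a = D_a Φ and D_a F_{ba} = ∂_a F_{ba} + A_a F_{ba} − F_{ba} A_a. (Flat-chart form of the first part of Lemma 3.1: M^D d^D = e(δ^D F).) -/
noncomputable section

/-- Points of `ℝⁿ`. -/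
abbrev Vec (n : ℕ) := Fin n → ℝ

/-- Real `k × k` matrices, as plain functions. -/
abbrev Mat (k : ℕ) := Fin k → Fin k → ℝ

/-- Matrix product. -/
def matMul {k : ℕ} (M N : Mat k) : Mat k := fun i j => ∑ l, M i l * N l j

/-- Matrix acting on a vector. -/
def matVec {k : ℕ} (M : Mat k) (v : Fin k → ℝ) : Fin k → ℝ := fun i => ∑ j, M i j * v j

/-- The identity matrix. -/
def idMat (k : ℕ) : Mat k := fun i j => if i = j then 1 else 0

/-- Partial derivative `∂_a f` in the `a`-th coordinate direction. -/
def pd {n : ℕ} {E : Type*} [NormedAddCommGroup E] [NormedSpace ℝ E]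
    (a : Fin n) (f : Vec n → E) (x : Vec n) : E :=
  fderiv ℝ f x (Pi.single a 1)

/-- The coupled covariant derivative `D_a φ = ∂_a φ + A_a φ` on `ℝᵏ`-valued maps. -/
def Dv {n k : ℕ} (A : Fin n → Vec n → Mat k) (a : Fin n)
    (φ : Vec n → Fin k → ℝ) (x : Vec n) : Fin k → ℝ :=
  pd a φ x + matVec (A a x) (φ x)

/-- The covariant derivative `D_a S = ∂_a S + A_a S − S A_a` on matrix-valued maps. -/
def Dm {n k : ℕ} (A : Fin n → Vec n → Mat k) (a : Fin n)
    (S : Vec n → Mat k) (x : Vec n) : Mat k :=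
  pd a S x + matMul (A a x) (S x) - matMul (S x) (A a x)

/-- The curvature `F_{ab} = ∂_a A_b − ∂_b A_a + A_a A_b − A_b A_a` of a connection form. -/
def curv {n k : ℕ} (A : Fin n → Vec n → Mat k) (a b : Fin n) (x : Vec n) : Mat k :=
  pd a (A b) x - pd b (A a) x + matMul (A a x) (A b x) - matMul (A b x) (A a x)

/-- The middle operator `(M^D ψ)_b = −Σ_a D_a(D_a ψ_b − D_b ψ_a) − Σ_a F_{ba} ψ_a`
of the Yang–Mills detour sequence, on `ℝᵏ`-valued 1-forms. -/
def MD {n k : ℕ} (A : Fin n → Vec n → Mat k) (ψ : Fin n → Vec n → Fin k → ℝ)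
    (b : Fin n) (x : Vec n) : Fin k → ℝ :=
  -(∑ a, Dv A a (fun y => Dv A a (ψ b) y - Dv A b (ψ a) y) x)
    - ∑ a, matVec (curv A b a x) (ψ a x)

/-!
The commutator identity `[D_b, D_a] Φ = F_{ba} Φ` turns the second-order part of `M^D(DΦ)` into
`Σ_a D_a(F_{ba} Φ)`. By the Leibniz rule this is `Σ_a (D_a F_{ba}) Φ + Σ_a F_{ba} D_a Φ`, and the
zeroth-order term of `M^D` is exactly what cancels the second sum.
-/

open scoped Topology

section Algebra

variable {k : ℕ}

/-- The action of matrices on vectors, bundled as a continuous bilinear map so that the linearity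
and product-rule lemmas of the library apply to `matVec`. -/
def matVecCLM (k : ℕ) : Mat k →L[ℝ] (Fin k → ℝ) →L[ℝ] (Fin k → ℝ) :=
  LinearMap.toContinuousBilinearMap
    (Matrix.mulVecBilin ℝ ℝ ∘ₗ (Matrix.ofLinearEquiv ℝ).toLinearMap)

theorem matVecCLM_apply (M : Mat k) (v : Fin k → ℝ) : matVecCLM k M v = matVec M v := rfl

theorem matVec_add (M : Mat k) (u v : Fin k → ℝ) :
    matVec M (u + v) = matVec M u + matVec M v :=
  map_add (matVecCLM k M) u v

theorem matVec_neg (M : Mat k) (v : Fin k → ℝ) : matVec M (-v) = -matVec M v :=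
  map_neg (matVecCLM k M) v

theorem add_matVec (M N : Mat k) (v : Fin k → ℝ) :
    matVec (M + N) v = matVec M v + matVec N v :=
  (matVecCLM k).map_add₂ M N v

theorem sub_matVec (M N : Mat k) (v : Fin k → ℝ) :
    matVec (M - N) v = matVec M v - matVec N v :=
  (matVecCLM k).map_sub₂ M N v

theorem sum_matVec {ι : Type*} (s : Finset ι) (M : ι → Mat k) (v : Fin k → ℝ) :
    matVec (∑ i ∈ s, M i) v = ∑ i ∈ s, matVec (M i) v :=
  Matrix.sum_mulVec s (fun i => Matrix.of (M i)) v

theorem matMul_matVec (M N : Mat k) (v : Fin k → ℝ) :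
    matVec (matMul M N) v = matVec M (matVec N v) :=
  (Matrix.mulVec_mulVec v (Matrix.of M) (Matrix.of N)).symm

end Algebra

section Differentiability

variable {k : ℕ} {E G : Type*} [NormedAddCommGroup E] [NormedSpace ℝ E] [NormedAddCommGroup G]
  [NormedSpace ℝ G] {f : G → E} {S T : G → Mat k} {φ : G → Fin k → ℝ} {x : G}

theorem differentiableAt_fderiv (hf : ContDiffAt ℝ 2 f x) :
    DifferentiableAt ℝ (fderiv ℝ f) x :=
  (hf.fderiv_right (m := 1) (by norm_num)).differentiableAt one_ne_zero

theorem differentiableAt_matVec (hS : DifferentiableAt ℝ S x) (hφ : DifferentiableAt ℝ φ x) :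
    DifferentiableAt ℝ (fun y => matVec (S y) (φ y)) x := by
  simp only [← matVecCLM_apply]
  fun_prop

theorem differentiableAt_matMul (hS : DifferentiableAt ℝ S x) (hT : DifferentiableAt ℝ T x) :
    DifferentiableAt ℝ (fun y => matMul (S y) (T y)) x := by
  unfold matMul
  fun_prop

end Differentiability

section PartialDerivative

variable {n k : ℕ} {E : Type*} [NormedAddCommGroup E] [NormedSpace ℝ E]
  {f g : Vec n → E} {S : Vec n → Mat k} {φ : Vec n → Fin k → ℝ} {x : Vec n}

theorem pd_add (a : Fin n) (hf : DifferentiableAt ℝ f x) (hg : DifferentiableAt ℝ g x) :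
    pd a (f + g) x = pd a f x + pd a g x := by
  simp only [pd, fderiv_add hf hg, add_apply]

theorem pd_neg (a : Fin n) (f : Vec n → E) (x : Vec n) : pd a (-f) x = -pd a f x := by
  simp only [pd, fderiv_neg, neg_apply]

theorem pd_congr_of_eventuallyEq (a : Fin n) (h : f =ᶠ[𝓝 x] g) : pd a f x = pd a g x := by
  simp only [pd, h.fderiv_eq]

theorem differentiableAt_pd (a : Fin n) (hf : ContDiffAt ℝ 2 f x) :
    DifferentiableAt ℝ (pd a f) x :=
  (differentiableAt_fderiv hf).clm_apply (differentiableAt_const _)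

theorem pd_pd (a b : Fin n) (hf : ContDiffAt ℝ 2 f x) :
    pd a (pd b f) x = fderiv ℝ (fderiv ℝ f) x (Pi.single a 1) (Pi.single b 1) := by
  change fderiv ℝ (fun y => fderiv ℝ f y (Pi.single b 1)) x (Pi.single a 1) = _
  simp [fderiv_clm_apply (differentiableAt_fderiv hf) (differentiableAt_const _)]

theorem pd_comm (a b : Fin n) (hf : ContDiffAt ℝ 2 f x) :
    pd a (pd b f) x = pd b (pd a f) x := by
  rw [pd_pd a b hf, pd_pd b a hf]
  exact (hf.isSymmSndFDerivAt (by simp)).eq _ _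

theorem pd_matVec (a : Fin n) (hS : DifferentiableAt ℝ S x) (hφ : DifferentiableAt ℝ φ x) :
    pd a (fun y => matVec (S y) (φ y)) x =
      matVec (pd a S x) (φ x) + matVec (S x) (pd a φ x) := by
  simp only [pd, ← matVecCLM_apply, (matVecCLM k).fderiv_of_bilinear hS hφ]
  exact add_comm _ _

end PartialDerivative

section CovariantDerivative

variable {n k : ℕ} {A : Fin n → Vec n → Mat k} {S : Vec n → Mat k} {φ χ : Vec n → Fin k → ℝ}
  {x : Vec n} {a b : Fin n}

theorem differentiableAt_curv (ha : ContDiffAt ℝ 2 (A a) x) (hb : ContDiffAt ℝ 2 (A b) x) :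
    DifferentiableAt ℝ (curv A a b) x := by
  have ha' := ha.differentiableAt two_ne_zero
  have hb' := hb.differentiableAt two_ne_zero
  exact (((differentiableAt_pd a hb).sub (differentiableAt_pd b ha)).add
    (differentiableAt_matMul ha' hb')).sub (differentiableAt_matMul hb' ha')

theorem Dv_neg (A : Fin n → Vec n → Mat k) (a : Fin n) (φ : Vec n → Fin k → ℝ) (x : Vec n) :
    Dv A a (-φ) x = -Dv A a φ x := by
  simp only [Dv, pd_neg, Pi.neg_apply, matVec_neg, neg_add]

theorem Dv_congr_of_eventuallyEq (A : Fin n → Vec n → Mat k) (a : Fin n) (h : φ =ᶠ[𝓝 x] χ) :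
    Dv A a φ x = Dv A a χ x := by
  rw [Dv, Dv, pd_congr_of_eventuallyEq a h, h.eq_of_nhds]

theorem Dv_matVec (A : Fin n → Vec n → Mat k) (a : Fin n)
    (hS : DifferentiableAt ℝ S x) (hφ : DifferentiableAt ℝ φ x) :
    Dv A a (fun y => matVec (S y) (φ y)) x =
      matVec (Dm A a S x) (φ x) + matVec (S x) (Dv A a φ x) := by
  simp only [Dv, Dm, pd_matVec a hS hφ, sub_matVec, add_matVec, matMul_matVec, matVec_add]
  abel

theorem Dv_Dv (a : Fin n) (hb : DifferentiableAt ℝ (A b) x) (hφ : ContDiffAt ℝ 2 φ x) :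
    Dv A a (Dv A b φ) x =
      pd a (pd b φ) x + (matVec (A b x) (pd a φ x) + matVec (A a x) (pd b φ x)) +
        matVec (pd a (A b) x + matMul (A a x) (A b x)) (φ x) := by
  have hφ' := hφ.differentiableAt two_ne_zero
  have pd_Dv : pd a (Dv A b φ) x =
      pd a (pd b φ) x + (matVec (pd a (A b) x) (φ x) + matVec (A b x) (pd a φ x)) := by
    rw [← pd_matVec a hb hφ']
    exact pd_add a (differentiableAt_pd b hφ) (differentiableAt_matVec hb hφ')
  rw [Dv, pd_Dv, Dv, matVec_add, add_matVec, matMul_matVec]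
  abel

theorem Dv_Dv_sub_Dv_Dv (ha : DifferentiableAt ℝ (A a) x) (hb : DifferentiableAt ℝ (A b) x)
    (hφ : ContDiffAt ℝ 2 φ x) :
    Dv A a (Dv A b φ) x - Dv A b (Dv A a φ) x = matVec (curv A a b x) (φ x) := by
  rw [Dv_Dv a hb hφ, Dv_Dv b ha hφ, pd_comm a b hφ, curv]
  simp only [sub_matVec, add_matVec]
  abel

theorem Dv_Dv_Dv_sub_Dv_Dv (ha : ContDiffAt ℝ 2 (A a) x) (hb : ContDiffAt ℝ 2 (A b) x)
    (hφ : ContDiffAt ℝ 2 φ x) :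
    Dv A a (fun y => Dv A a (Dv A b φ) y - Dv A b (Dv A a φ) y) x =
      -(matVec (Dm A a (curv A b a) x) (φ x) + matVec (curv A b a x) (Dv A a φ x)) := by
  have commutator : (fun y => Dv A a (Dv A b φ) y - Dv A b (Dv A a φ) y) =ᶠ[𝓝 x]
      -fun y => matVec (curv A b a y) (φ y) := by
    filter_upwards [ha.eventually (by simp), hb.eventually (by simp), hφ.eventually (by simp)]
      with y hay hby hφy
    rw [← neg_sub, Dv_Dv_sub_Dv_Dv (hby.differentiableAt two_ne_zero)
      (hay.differentiableAt two_ne_zero) hφy, Pi.neg_apply]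
  rw [Dv_congr_of_eventuallyEq A a commutator, Dv_neg,
    Dv_matVec A a (differentiableAt_curv hb ha) (hφ.differentiableAt two_ne_zero)]

theorem MD_comp_dD_general (hA : ∀ a, ContDiffAt ℝ 2 (A a) x) (hφ : ContDiffAt ℝ 2 φ x)
    (b : Fin n) :
    MD A (fun a => Dv A a φ) b x = matVec (∑ a, Dm A a (curv A b a) x) (φ x) := by
  simp only [MD, Dv_Dv_Dv_sub_Dv_Dv (hA _) (hA b) hφ, Finset.sum_neg_distrib,
    Finset.sum_add_distrib, neg_neg, add_sub_cancel_right, sum_matVec]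

end CovariantDerivative

/-- Flat-chart form of the first part of Lemma 3.1: `M^D d^D = e(δ^D F)`, i.e.
`(M^D(DΦ))_b = Σ_a (D_a F_{ba}) Φ`. -/
theorem MD_comp_dD (n k : ℕ) (hn : 1 ≤ n) (hk : 1 ≤ k)
    (A : Fin n → Vec n → Mat k) (hA : ∀ a, ContDiff ℝ (⊤ : ℕ∞) (A a))
    (Φ : Vec n → Fin k → ℝ) (hΦ : ContDiff ℝ (⊤ : ℕ∞) Φ)
    (b : Fin n) (x : Vec n) :
    MD A (fun a => Dv A a Φ) b x = matVec (∑ a, Dm A a (curv A b a) x) (Φ x) :=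
  MD_comp_dD_general (fun a => (contDiff_infty.1 (hA a) 2).contDiffAt)
    (contDiff_infty.1 hΦ 2).contDiffAt b
end
end

section
/- Fix integers n, k ≥ 1, and let A be a connection form on ℝⁿ such that every matrix A_a(x) is skew-symmetric (an orthogonal connection). Then the operator M^D is formally self-adjoint: for all smooth, compactly supported ℝᵏ-valued 1-forms φ and ψ on ℝⁿ, ∫_{ℝⁿ} Σ_b ⟨(M^D φ)_b(x), ψ_b(x)⟩ dx = ∫_{ℝⁿ} Σ_b ⟨φ_b(x), (M^D ψ)_b(x)⟩ dx, where ⟨·,·⟩ is the Euclidean inner product on ℝᵏ. (Flat-chart form of Theorem 3.2(i).) -/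
noncomputable section

open MeasureTheory

open scoped Matrix

/-!
An orthogonal connection is metric: `∂_a (u ⬝ᵥ v) = D_a u ⬝ᵥ v + u ⬝ᵥ D_a v`. Writing
`(d^D φ)_{ab} = D_a φ_b − D_b φ_a`, it follows that `Σ_b (M^D φ)_b ⬝ᵥ ψ_b` equals, up to a
divergence, `Σ_{ab} (d^D φ)_{ab} ⬝ᵥ D_a ψ_b − Σ_{ab} F_{ba} φ_a ⬝ᵥ ψ_b`. The first sum is symmetric
in `φ` and `ψ` because `d^D φ` is antisymmetric in `a` and `b`, the second because the transpose of
`F_{ab}` is `F_{ba}`. Hence the defect of symmetry of `M^D` is the divergence of a vector field,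
which has compact support as soon as one of the two forms does, and therefore integrates to zero.
-/

section OrthogonalConnection

variable {n k : ℕ}

section MatrixAction

theorem matVec_eq_mulVec (M : Mat k) (v : Fin k → ℝ) : matVec M v = Matrix.of M *ᵥ v := rfl

variable {M N : Mat k}

theorem matVec_dotProduct_of_transpose (hMN : ∀ i j, M i j = N j i) (u v : Fin k → ℝ) :
    matVec M u ⬝ᵥ v = u ⬝ᵥ matVec N v := by
  have hM : Matrix.of M = (Matrix.of N)ᵀ := Matrix.ext hMN
  rw [matVec_eq_mulVec, matVec_eq_mulVec, hM, Matrix.mulVec_transpose, Matrix.dotProduct_mulVec]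

theorem matVec_dotProduct_of_skew (hM : ∀ i j, M i j = -M j i) (u v : Fin k → ℝ) :
    matVec M u ⬝ᵥ v = -(u ⬝ᵥ matVec M v) := by
  have hneg : matVec (-M) v = -matVec M v := Matrix.neg_mulVec v M
  rw [matVec_dotProduct_of_transpose (N := -M) hM, hneg, dotProduct_neg]

theorem matMul_apply_comm_of_skew (hM : ∀ i j, M i j = -M j i) (hN : ∀ i j, N i j = -N j i)
    (i j : Fin k) : matMul M N i j = matMul N M j i :=
  Finset.sum_congr rfl fun l _ => by rw [hM i l, hN l j]; ring

end MatrixAction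

theorem sum_sub_swap_dotProduct {ι κ : Type*} [Fintype ι] [Fintype κ]
    (U V : ι → ι → κ → ℝ) :
    ∑ a, ∑ b, (U a b - U b a) ⬝ᵥ V a b = ∑ a, ∑ b, U a b ⬝ᵥ (V a b - V b a) := by
  have hswap : ∑ a, ∑ b, U b a ⬝ᵥ V a b = ∑ a, ∑ b, U a b ⬝ᵥ V b a := Finset.sum_comm
  simp only [sub_dotProduct, dotProduct_sub, Finset.sum_sub_distrib, hswap]

section Pairing

variable {X ι : Type*} [Fintype ι] {u v : X → ι → ℝ}

theorem contDiff_dotProduct [NormedAddCommGroup X] [NormedSpace ℝ X] {m : WithTop ℕ∞}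
    (hu : ContDiff ℝ m u) (hv : ContDiff ℝ m v) : ContDiff ℝ m fun x => u x ⬝ᵥ v x :=
  ContDiff.sum fun i _ => (contDiff_pi.1 hu i).mul (contDiff_pi.1 hv i)

theorem differentiableAt_dotProduct [NormedAddCommGroup X] [NormedSpace ℝ X] {x : X}
    (hu : DifferentiableAt ℝ u x) (hv : DifferentiableAt ℝ v x) :
    DifferentiableAt ℝ (fun y => u y ⬝ᵥ v y) x :=
  DifferentiableAt.fun_sum fun i _ => (differentiableAt_pi.1 hu i).mul (differentiableAt_pi.1 hv i)

theorem hasCompactSupport_dotProduct_right [TopologicalSpace X] (u : X → ι → ℝ)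
    (hv : HasCompactSupport v) : HasCompactSupport fun x => u x ⬝ᵥ v x :=
  hv.mono fun x hx hvx => hx <| by simp only [hvx, dotProduct_zero]

theorem contDiff_matVec [NormedAddCommGroup X] [NormedSpace ℝ X] {m : WithTop ℕ∞}
    {S : X → Mat k} {v : X → Fin k → ℝ} (hS : ContDiff ℝ m S) (hv : ContDiff ℝ m v) :
    ContDiff ℝ m fun x => matVec (S x) (v x) :=
  contDiff_pi.2 fun i => contDiff_dotProduct (contDiff_pi.1 hS i) hv

end Pairing

section PartialDerivative

variable {E : Type*} [NormedAddCommGroup E] [NormedSpace ℝ E]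

theorem contDiff_pd {m : WithTop ℕ∞} (a : Fin n) {f : Vec n → E}
    (hf : ContDiff ℝ (m + 1) f) : ContDiff ℝ m (pd a f) :=
  (hf.fderiv_right le_rfl).clm_apply contDiff_const

theorem pd_sub (a : Fin n) {f g : Vec n → E} {x : Vec n} (hf : DifferentiableAt ℝ f x)
    (hg : DifferentiableAt ℝ g x) : pd a (fun y => f y - g y) x = pd a f x - pd a g x := by
  simp only [pd, fderiv_fun_sub hf hg, sub_apply]

theorem pd_sum {ι : Type*} (s : Finset ι) (a : Fin n) {f : ι → Vec n → E} {x : Vec n}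
    (hf : ∀ i ∈ s, DifferentiableAt ℝ (f i) x) :
    pd a (fun y => ∑ i ∈ s, f i y) x = ∑ i ∈ s, pd a (f i) x := by
  simp only [pd, fderiv_fun_sum hf, sum_apply]

theorem pd_apply {ι : Type*} [Fintype ι] (a : Fin n) {f : Vec n → ι → E} {x : Vec n}
    (hf : DifferentiableAt ℝ f x) (i : ι) : pd a f x i = pd a (fun y => f y i) x := by
  simp only [pd, fderiv_apply hf i, ContinuousLinearMap.comp_apply, ContinuousLinearMap.proj_apply]

theorem pd_dotProduct {ι : Type*} [Fintype ι] (a : Fin n) {u v : Vec n → ι → ℝ} {x : Vec n}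
    (hu : DifferentiableAt ℝ u x) (hv : DifferentiableAt ℝ v x) :
    pd a (fun y => u y ⬝ᵥ v y) x = pd a u x ⬝ᵥ v x + u x ⬝ᵥ pd a v x := by
  let B : (ι → ℝ) →L[ℝ] (ι → ℝ) →L[ℝ] ℝ := (dotProductBilin ℝ ℝ).toContinuousBilinearMap
  have hB := congrArg (· (Pi.single a 1)) (B.fderiv_of_bilinear hu hv)
  exact hB.trans (add_comm _ _)

theorem pd_apply_skew (a : Fin n) {S : Vec n → Mat k} {x : Vec n} (hS : DifferentiableAt ℝ S x)
    (hskew : ∀ y i j, S y i j = -S y j i) (i j : Fin k) : pd a S x i j = -pd a S x j i := by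
  have hentry (i j : Fin k) : pd a S x i j = pd a (fun y => S y i j) x := by
    rw [pd_apply a hS, pd_apply a (differentiableAt_pi.1 hS i)]
  rw [hentry, hentry, funext fun y => hskew y i j]
  simp only [pd, fderiv_fun_neg, neg_apply]

theorem hasCompactSupport_pd (a : Fin n) {f : Vec n → E} (hf : HasCompactSupport f) :
    HasCompactSupport (pd a f) :=
  hf.fderiv_apply ℝ _

theorem integrable_pd (a : Fin n) {f : Vec n → E} (hf : ContDiff ℝ 1 f)
    (hfc : HasCompactSupport f) : Integrable (pd a f) :=
  (contDiff_pd (m := 0) a hf).continuous.integrable_of_hasCompactSupport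
    (hasCompactSupport_pd a hfc)

theorem integral_pd_eq_zero (a : Fin n) {f : Vec n → E} (hf : ContDiff ℝ 1 f)
    (hfc : HasCompactSupport f) : ∫ x, pd a f x = 0 := by
  have hparts := integral_smul_fderiv_eq_neg_fderiv_smul_of_integrable
    (μ := (volume : Measure (Vec n))) (f := fun _ => (1 : ℝ)) (g := f) (v := Pi.single a 1)
    (by simp) (by simpa using! integrable_pd a hf hfc)
    (by simpa using hf.continuous.integrable_of_hasCompactSupport hfc)
    (fun x _ => differentiableAt_const 1) (fun x _ => hf.differentiable one_ne_zero x)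
  simpa [pd] using hparts

theorem integral_sum_pd_eq_zero {J : Fin n → Vec n → ℝ} (hJ : ∀ a, ContDiff ℝ 1 (J a))
    (hJc : ∀ a, HasCompactSupport (J a)) : ∫ x, ∑ a, pd a (J a) x = 0 := by
  rw [integral_finsetSum _ fun a _ => integrable_pd a (hJ a) (hJc a)]
  exact Finset.sum_eq_zero fun a _ => integral_pd_eq_zero a (hJ a) (hJc a)

end PartialDerivative

section CovariantDerivative

variable {A : Fin n → Vec n → Mat k}

theorem contDiff_Dv {m : WithTop ℕ∞} {a : Fin n} (hA : ContDiff ℝ m (A a))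
    {u : Vec n → Fin k → ℝ} (hu : ContDiff ℝ (m + 1) u) : ContDiff ℝ m (Dv A a u) :=
  (contDiff_pd a hu).add (contDiff_matVec hA (hu.of_le le_self_add))

theorem hasCompactSupport_Dv (a : Fin n) {u : Vec n → Fin k → ℝ} (hu : HasCompactSupport u) :
    HasCompactSupport (Dv A a u) :=
  (hasCompactSupport_pd a hu).add <| hu.mono fun x hx hux => hx <| by
    simp only [hux, matVec_eq_mulVec, Matrix.mulVec_zero]

theorem pd_dotProduct_eq_Dv {a : Fin n} {u v : Vec n → Fin k → ℝ} {x : Vec n}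
    (hskew : ∀ i j, A a x i j = -A a x j i)
    (hu : DifferentiableAt ℝ u x) (hv : DifferentiableAt ℝ v x) :
    pd a (fun y => u y ⬝ᵥ v y) x = Dv A a u x ⬝ᵥ v x + u x ⬝ᵥ Dv A a v x := by
  simp only [pd_dotProduct a hu hv, Dv, add_dotProduct, dotProduct_add,
    matVec_dotProduct_of_skew hskew]
  ring

theorem continuous_curv {a b : Fin n} (ha : ContDiff ℝ 1 (A a)) (hb : ContDiff ℝ 1 (A b)) :
    Continuous (curv A a b) :=
  (((contDiff_pd (m := 0) a hb).continuous.sub (contDiff_pd (m := 0) b ha).continuous).add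
    (ha.continuous.matrix_mul hb.continuous)).sub (hb.continuous.matrix_mul ha.continuous)

theorem curv_apply_comm {a b : Fin n} {x : Vec n}
    (hskew : ∀ c y i j, A c y i j = -A c y j i)
    (ha : DifferentiableAt ℝ (A a) x) (hb : DifferentiableAt ℝ (A b) x) (i j : Fin k) :
    curv A a b x i j = curv A b a x j i := by
  simp only [curv, Pi.add_apply, Pi.sub_apply]
  rw [pd_apply_skew a hb (hskew b) i j, pd_apply_skew b ha (hskew a) i j,
    matMul_apply_comm_of_skew (hskew a x) (hskew b x) i j,
    matMul_apply_comm_of_skew (hskew b x) (hskew a x) i j]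
  ring

/-- The covariant exterior derivative `(d^D φ)_{ab} = D_a φ_b − D_b φ_a` of an `ℝᵏ`-valued
1-form, so that `M^D` is the sum of the divergence term `−Σ_a D_a (d^D φ)_{ab}` and the curvature
term `−Σ_a F_{ba} φ_a`. -/
def covExtDeriv (A : Fin n → Vec n → Mat k) (φ : Fin n → Vec n → Fin k → ℝ) (a b : Fin n)
    (x : Vec n) : Fin k → ℝ :=
  Dv A a (φ b) x - Dv A b (φ a) x

/-- The Green current of a pair of `ℝᵏ`-valued 1-forms: the vector field whose divergence is the
pointwise defect of symmetry of `M^D`. -/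
def greenCurrent (A : Fin n → Vec n → Mat k) (φ ψ : Fin n → Vec n → Fin k → ℝ) (a : Fin n)
    (x : Vec n) : ℝ :=
  ∑ b, (φ b x ⬝ᵥ covExtDeriv A ψ a b x - covExtDeriv A φ a b x ⬝ᵥ ψ b x)

variable {φ ψ : Fin n → Vec n → Fin k → ℝ}

theorem contDiff_covExtDeriv {m : WithTop ℕ∞} (hA : ∀ a, ContDiff ℝ m (A a))
    (hφ : ∀ b, ContDiff ℝ (m + 1) (φ b)) (a b : Fin n) : ContDiff ℝ m (covExtDeriv A φ a b) :=
  (contDiff_Dv (hA a) (hφ b)).sub (contDiff_Dv (hA b) (hφ a))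

theorem hasCompactSupport_covExtDeriv (hφ : ∀ b, HasCompactSupport (φ b)) (a b : Fin n) :
    HasCompactSupport (covExtDeriv A φ a b) :=
  (hasCompactSupport_Dv a (hφ b)).sub (hasCompactSupport_Dv b (hφ a))

theorem contDiff_greenCurrent {m : WithTop ℕ∞} (hA : ∀ a, ContDiff ℝ m (A a))
    (hφ : ∀ b, ContDiff ℝ (m + 1) (φ b)) (hψ : ∀ b, ContDiff ℝ (m + 1) (ψ b)) (a : Fin n) :
    ContDiff ℝ m (greenCurrent A φ ψ a) :=
  ContDiff.sum fun b _ =>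
    (contDiff_dotProduct ((hφ b).of_le le_self_add) (contDiff_covExtDeriv hA hψ a b)).sub
      (contDiff_dotProduct (contDiff_covExtDeriv hA hφ a b) ((hψ b).of_le le_self_add))

theorem hasCompactSupport_greenCurrent (hψ : ∀ b, HasCompactSupport (ψ b)) (a : Fin n) :
    HasCompactSupport (greenCurrent A φ ψ a) := by
  have hterm (b : Fin n) : HasCompactSupport fun x =>
      φ b x ⬝ᵥ covExtDeriv A ψ a b x - covExtDeriv A φ a b x ⬝ᵥ ψ b x :=
    (hasCompactSupport_dotProduct_right _ (hasCompactSupport_covExtDeriv hψ a b)).sub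
      (hasCompactSupport_dotProduct_right _ (hψ b))
  have hsum := HasCompactSupport.finset_sum fun b (_ : b ∈ Finset.univ) => hterm b
  rwa [Finset.sum_fn] at hsum

theorem pd_greenCurrent (hA : ∀ a, ContDiff ℝ 1 (A a))
    (hskew : ∀ a x i j, A a x i j = -A a x j i)
    (hφ : ∀ b, ContDiff ℝ 2 (φ b)) (hψ : ∀ b, ContDiff ℝ 2 (ψ b)) (a : Fin n) (x : Vec n) :
    pd a (greenCurrent A φ ψ a) x =
      ∑ b, ((Dv A a (φ b) x ⬝ᵥ covExtDeriv A ψ a b x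
          + φ b x ⬝ᵥ Dv A a (covExtDeriv A ψ a b) x)
        - (Dv A a (covExtDeriv A φ a b) x ⬝ᵥ ψ b x
          + covExtDeriv A φ a b x ⬝ᵥ Dv A a (ψ b) x)) := by
  have hform {χ : Fin n → Vec n → Fin k → ℝ} (hχ : ∀ b, ContDiff ℝ 2 (χ b)) (b : Fin n) :
      DifferentiableAt ℝ (χ b) x := (hχ b).differentiable two_ne_zero x
  have hderiv {χ : Fin n → Vec n → Fin k → ℝ} (hχ : ∀ b, ContDiff ℝ 2 (χ b)) (b : Fin n) :
      DifferentiableAt ℝ (covExtDeriv A χ a b) x :=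
    (contDiff_covExtDeriv hA hχ a b).differentiable one_ne_zero x
  have hl (b : Fin n) := differentiableAt_dotProduct (hform hφ b) (hderiv hψ b)
  have hr (b : Fin n) := differentiableAt_dotProduct (hderiv hφ b) (hform hψ b)
  calc pd a (greenCurrent A φ ψ a) x
      = ∑ b, pd a (fun y =>
          φ b y ⬝ᵥ covExtDeriv A ψ a b y - covExtDeriv A φ a b y ⬝ᵥ ψ b y) x :=
        pd_sum _ a fun b _ => (hl b).fun_sub (hr b)
    _ = _ := Finset.sum_congr rfl fun b _ => by
        rw [pd_sub a (hl b) (hr b),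
          pd_dotProduct_eq_Dv (hskew a x) (hform hφ b) (hderiv hψ b),
          pd_dotProduct_eq_Dv (hskew a x) (hderiv hφ b) (hform hψ b)]

theorem continuous_MD (hA : ∀ a, ContDiff ℝ 1 (A a)) (hφ : ∀ a, ContDiff ℝ 2 (φ a))
    (b : Fin n) : Continuous (MD A φ b) := by
  have hdiv (a : Fin n) : Continuous (Dv A a (covExtDeriv A φ a b)) :=
    (contDiff_Dv (m := 0) ((hA a).of_le zero_le_one)
      (contDiff_covExtDeriv hA hφ a b)).continuous
  have hcurv (a : Fin n) : Continuous fun x => matVec (curv A b a x) (φ a x) :=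
    (continuous_curv (hA b) (hA a)).matrix_mulVec (hφ a).continuous
  exact (continuous_finsetSum _ fun a _ => hdiv a).neg.sub
    (continuous_finsetSum _ fun a _ => hcurv a)

theorem sum_MD_dotProduct (x : Vec n) (χ : Fin n → Fin k → ℝ) :
    ∑ b, MD A φ b x ⬝ᵥ χ b = -(∑ a, ∑ b, Dv A a (covExtDeriv A φ a b) x ⬝ᵥ χ b)
      - ∑ a, ∑ b, matVec (curv A b a x) (φ a x) ⬝ᵥ χ b := by
  have hMD (b : Fin n) : MD A φ b x = -(∑ a, Dv A a (covExtDeriv A φ a b) x)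
      - ∑ a, matVec (curv A b a x) (φ a x) := rfl
  simp only [hMD, sub_dotProduct, neg_dotProduct, sum_dotProduct, Finset.sum_sub_distrib,
    Finset.sum_neg_distrib]
  rw [Finset.sum_comm, Finset.sum_comm (f := fun b a => matVec (curv A b a x) (φ a x) ⬝ᵥ χ b)]

theorem sum_curv_dotProduct_comm {x : Vec n} (hA : ∀ a, DifferentiableAt ℝ (A a) x)
    (hskew : ∀ a y i j, A a y i j = -A a y j i) (u v : Fin n → Fin k → ℝ) :
    ∑ a, ∑ b, matVec (curv A b a x) (u a) ⬝ᵥ v b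
      = ∑ a, ∑ b, matVec (curv A b a x) (v a) ⬝ᵥ u b := by
  rw [Finset.sum_comm]
  refine Finset.sum_congr rfl fun b _ => Finset.sum_congr rfl fun a _ => ?_
  rw [matVec_dotProduct_of_transpose (curv_apply_comm hskew (hA b) (hA a)), dotProduct_comm]

theorem sum_MD_dotProduct_sub_eq_sum_pd_greenCurrent (hA : ∀ a, ContDiff ℝ 1 (A a))
    (hskew : ∀ a x i j, A a x i j = -A a x j i)
    (hφ : ∀ b, ContDiff ℝ 2 (φ b)) (hψ : ∀ b, ContDiff ℝ 2 (ψ b)) (x : Vec n) :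
    ∑ b, MD A φ b x ⬝ᵥ ψ b x - ∑ b, φ b x ⬝ᵥ MD A ψ b x
      = ∑ a, pd a (greenCurrent A φ ψ a) x := by
  have henergy : ∑ a, ∑ b, covExtDeriv A φ a b x ⬝ᵥ Dv A a (ψ b) x
      = ∑ a, ∑ b, Dv A a (φ b) x ⬝ᵥ covExtDeriv A ψ a b x :=
    sum_sub_swap_dotProduct (fun a b => Dv A a (φ b) x) (fun a b => Dv A a (ψ b) x)
  have hcurv := sum_curv_dotProduct_comm (fun a => (hA a).differentiable one_ne_zero x) hskew
    (φ · x) (ψ · x)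
  simp only [dotProduct_comm (φ _ x), sum_MD_dotProduct x (ψ · x), sum_MD_dotProduct x (φ · x),
    pd_greenCurrent hA hskew hφ hψ, Finset.sum_sub_distrib, Finset.sum_add_distrib, henergy, hcurv]
  ring

end CovariantDerivative

theorem MD_formally_selfAdjoint_general {A : Fin n → Vec n → Mat k}
    (hA : ∀ a, ContDiff ℝ 1 (A a)) (hskew : ∀ a x i j, A a x i j = -A a x j i)
    {φ ψ : Fin n → Vec n → Fin k → ℝ} (hφ : ∀ b, ContDiff ℝ 2 (φ b))
    (hψ : ∀ b, ContDiff ℝ 2 (ψ b)) (hψc : ∀ b, HasCompactSupport (ψ b)) :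
    ∫ x, ∑ b, MD A φ b x ⬝ᵥ ψ b x = ∫ x, ∑ b, φ b x ⬝ᵥ MD A ψ b x := by
  have hJ := contDiff_greenCurrent hA hφ hψ
  have hJc := hasCompactSupport_greenCurrent (A := A) (φ := φ) hψc
  have hint : Integrable fun x => ∑ b, MD A φ b x ⬝ᵥ ψ b x :=
    integrable_finsetSum _ fun b _ =>
      ((continuous_MD hA hφ b).dotProduct (hψ b).continuous).integrable_of_hasCompactSupport
        (hasCompactSupport_dotProduct_right _ (hψc b))
  have hint_div : Integrable fun x => ∑ a, pd a (greenCurrent A φ ψ a) x :=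
    integrable_finsetSum _ fun a _ => integrable_pd a (hJ a) (hJc a)
  calc ∫ x, ∑ b, MD A φ b x ⬝ᵥ ψ b x
      = ∫ x, (∑ b, MD A φ b x ⬝ᵥ ψ b x - ∑ a, pd a (greenCurrent A φ ψ a) x) := by
        rw [integral_sub hint hint_div, integral_sum_pd_eq_zero hJ hJc, sub_zero]
    _ = ∫ x, ∑ b, φ b x ⬝ᵥ MD A ψ b x := by
        simp only [← sum_MD_dotProduct_sub_eq_sum_pd_greenCurrent hA hskew hφ hψ, sub_sub_cancel]

end OrthogonalConnection

/-- Flat-chart form of Theorem 3.2(i): for an orthogonal connection form `A`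
(each `A_a(x)` skew-symmetric), the operator `M^D` is formally self-adjoint on
smooth compactly supported `ℝᵏ`-valued 1-forms. -/
theorem MD_formally_selfAdjoint (n k : ℕ) (hn : 1 ≤ n) (hk : 1 ≤ k)
    (A : Fin n → Vec n → Mat k) (hA : ∀ a, ContDiff ℝ (⊤ : ℕ∞) (A a))
    (hskew : ∀ (a : Fin n) (x : Vec n) (i j : Fin k), A a x i j = - A a x j i)
    (φ ψ : Fin n → Vec n → Fin k → ℝ)
    (hφ : ∀ a, ContDiff ℝ (⊤ : ℕ∞) (φ a)) (hψ : ∀ a, ContDiff ℝ (⊤ : ℕ∞) (ψ a))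
    (hφc : ∀ a, HasCompactSupport (φ a)) (hψc : ∀ a, HasCompactSupport (ψ a)) :
    ∫ x : Vec n, ∑ b, ∑ i, MD A φ b x i * ψ b x i
      = ∫ x : Vec n, ∑ b, ∑ i, φ b x i * MD A ψ b x i :=
  MD_formally_selfAdjoint_general (fun a => contDiff_infty.1 (hA a) 1) hskew
    (fun b => contDiff_infty.1 (hφ b) 2) (fun b => contDiff_infty.1 (hψ b) 2) hψc
end
end

section
/- Let n ≥ 1 and let Cl be the Clifford algebra of the quadratic form Q(x) = −‖x‖²/2 on Euclidean space ℝⁿ; set β_a = ι(e_a) for the standard basis vectors e_a, so that β_a β_b + β_b β_a = −δ_{ab}·1 in Cl. Let R be a Riemann-type tensor on {1,…,n}. Then for each index a, Σ_{b,c,d} R_{abcd} · β_b β_c β_d = Σ_b Ric_{ab} · β_b in Cl, where Ric_{ab} = Σ_c R_{cacb}. (First identity of equation (4.13) in the proof of Proposition 4.7.) -/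
open CliffordAlgebra

/-!
Contract a tensor `T_{bcd}` whose cyclic sums vanish against the three cyclic rotations of
`β_b β_c β_d`: relabelling the indices, the total is zero. The Clifford relation moves every
rotation back to `β_b β_c β_d` at the cost of terms linear in `β`, so three times the cubic
contraction is a linear one. Antisymmetry of `T` in its last two indices kills one of the linear
terms and identifies the others up to sign and scale, so that they add up to three times the trace
of `T` over its first and third indices. For `T = R_a` that trace is the Ricci contraction.
-/

section CyclicSums

variable {I K A : Type*} [Fintype I]

theorem sum_sum_sum_rotate [AddCommMonoid A] (f : I → I → I → A) :
    ∑ b, ∑ c, ∑ d, f c d b = ∑ b, ∑ c, ∑ d, f b c d := by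
  rw [Finset.sum_comm]
  exact Finset.sum_congr rfl fun _ _ => Finset.sum_comm

theorem sum_smul_add_rotations_eq_zero [Semiring K] [AddCommMonoid A] [Module K A]
    {T : I → I → I → K} (cyclic : ∀ b c d, T b c d + T c d b + T d b c = 0)
    (f : I → I → I → A) :
    ∑ b, ∑ c, ∑ d, T b c d • (f b c d + f d b c + f c d b) = 0 := by
  have rotate_once : ∑ b, ∑ c, ∑ d, T b c d • f d b c = ∑ b, ∑ c, ∑ d, T c d b • f b c d :=
    (sum_sum_sum_rotate fun b c d => T b c d • f d b c).symm
  have rotate_twice : ∑ b, ∑ c, ∑ d, T b c d • f c d b = ∑ b, ∑ c, ∑ d, T d b c • f b c d :=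
    sum_sum_sum_rotate fun b c d => T d b c • f b c d
  simp only [smul_add, Finset.sum_add_distrib]
  rw [rotate_once, rotate_twice]
  simp only [← Finset.sum_add_distrib, ← add_smul, cyclic, zero_smul, Finset.sum_const_zero]

end CyclicSums

section CliffordContraction

variable {I K M : Type*} [Fintype I] [CommRing K] [AddCommGroup M] [Module K M]
  {Q : QuadraticForm K M}

theorem ι_mul_ι_mul_ι_add_rotations (x y z : M) :
    ι Q x * ι Q y * ι Q z + ι Q z * ι Q x * ι Q y + ι Q y * ι Q z * ι Q x =
      (3 : K) • (ι Q x * ι Q y * ι Q z) + (2 * QuadraticMap.polar Q x z) • ι Q y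
        - QuadraticMap.polar Q x y • ι Q z - QuadraticMap.polar Q y z • ι Q x := by
  have swap (u v : M) :
      ι Q u * ι Q v = QuadraticMap.polar Q v u • 1 - ι Q v * ι Q u := by
    rw [← Algebra.algebraMap_eq_smul_one, QuadraticMap.polar_comm, ← ι_mul_ι_add_swap,
      add_sub_cancel_right]
  have rotate_last : ι Q z * ι Q x * ι Q y = ι Q x * ι Q y * ι Q z
      + QuadraticMap.polar Q x z • ι Q y - QuadraticMap.polar Q y z • ι Q x := by
    rw [swap z x, sub_mul, mul_assoc, swap z y, mul_sub, smul_one_mul, mul_smul_one, ← mul_assoc]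
    abel
  have rotate_first : ι Q y * ι Q z * ι Q x = ι Q x * ι Q y * ι Q z
      + QuadraticMap.polar Q x z • ι Q y - QuadraticMap.polar Q x y • ι Q z := by
    rw [mul_assoc, swap z x, mul_sub, ← mul_assoc, swap y x, sub_mul, smul_one_mul, mul_smul_one]
    abel
  rw [rotate_last, rotate_first]
  module

theorem sum_mul_polar_eq_zero_of_antisymm {S : I → I → K} (antisymm : ∀ c d, S c d = -S d c)
    (x : I → M) : ∑ c, ∑ d, S c d * QuadraticMap.polar Q (x c) (x d) = 0 := by
  have diagonal (c : I) : S c c * QuadraticMap.polar Q (x c) (x c) = 0 := by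
    -- `polar Q v v = 2 * Q v`, so `S c c + S c c = 0` suffices even in characteristic two.
    rw [QuadraticMap.polar_self, two_nsmul]
    linear_combination Q (x c) * antisymm c c
  rw [← Fintype.sum_prod_type']
  refine Finset.sum_involution (fun p _ => p.swap) ?_ ?_ (by simp) (by simp)
  · rintro ⟨c, d⟩ -
    simp only [Prod.swap, QuadraticMap.polar_comm Q (x d), antisymm d c]
    ring
  · rintro ⟨c, d⟩ - nonzero fixed
    obtain rfl : d = c := congrArg Prod.fst fixed
    exact nonzero (diagonal d)

theorem sum_smul_ι_mul_ι_mul_ι (h3 : IsUnit (3 : K)) {T : I → I → I → K}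
    (antisymm : ∀ b c d, T b c d = -T b d c)
    (cyclic : ∀ b c d, T b c d + T c d b + T d b c = 0) (x : I → M) :
    ∑ b, ∑ c, ∑ d, T b c d • (ι Q (x b) * ι Q (x c) * ι Q (x d)) =
      -∑ b, ∑ c, ∑ d, (T b c d * QuadraticMap.polar Q (x b) (x d)) • ι Q (x c) := by
  have trace_last_two :
      ∑ b, ∑ c, ∑ d, (T b c d * QuadraticMap.polar Q (x c) (x d)) • ι Q (x b) = 0 := by
    simp only [← Finset.sum_smul, sum_mul_polar_eq_zero_of_antisymm (antisymm _), zero_smul,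
      Finset.sum_const_zero]
  have trace_first_two :
      ∑ b, ∑ c, ∑ d, (T b c d * QuadraticMap.polar Q (x b) (x c)) • ι Q (x d) =
        -∑ b, ∑ c, ∑ d, (T b c d * QuadraticMap.polar Q (x b) (x d)) • ι Q (x c) := by
    simp only [← Finset.sum_neg_distrib, ← neg_smul, ← neg_mul, ← antisymm]
    exact Finset.sum_congr rfl fun _ _ => Finset.sum_comm
  have rotations :
      (3 : K) • ∑ b, ∑ c, ∑ d, T b c d • (ι Q (x b) * ι Q (x c) * ι Q (x d))
        + (2 : K) • ∑ b, ∑ c, ∑ d, (T b c d * QuadraticMap.polar Q (x b) (x d)) • ι Q (x c)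
        - ∑ b, ∑ c, ∑ d, (T b c d * QuadraticMap.polar Q (x b) (x c)) • ι Q (x d)
        - ∑ b, ∑ c, ∑ d, (T b c d * QuadraticMap.polar Q (x c) (x d)) • ι Q (x b) = 0 := by
    rw [← sum_smul_add_rotations_eq_zero cyclic fun b c d => ι Q (x b) * ι Q (x c) * ι Q (x d)]
    simp only [ι_mul_ι_mul_ι_add_rotations, Finset.smul_sum, ← Finset.sum_add_distrib,
      ← Finset.sum_sub_distrib]
    refine Fintype.sum_congr _ _ fun b => Fintype.sum_congr _ _ fun c =>
      Fintype.sum_congr _ _ fun d => ?_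
    module
  rw [trace_first_two, trace_last_two] at rotations
  refine h3.smul_left_cancel.mp (sub_eq_zero.mp ?_)
  rw [← rotations]
  module

theorem riemann_clifford_contraction_ricci_general (h3 : IsUnit (3 : K))
    {R : I → I → I → I → K}
    (antisymm_left : ∀ a b c d, R a b c d = -R b a c d)
    (antisymm_right : ∀ a b c d, R a b c d = -R a b d c)
    (bianchi : ∀ a b c d, R a b c d + R a c d b + R a d b c = 0) (x : I → M) (a : I) :
    ∑ b, ∑ c, ∑ d, R a b c d • (ι Q (x b) * ι Q (x c) * ι Q (x d)) =
      -∑ b, (∑ c, ∑ d, R c a d b * QuadraticMap.polar Q (x c) (x d)) • ι Q (x b) := by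
  have swap_pairs (b c d : I) : R a b c d = R b a d c := by
    rw [antisymm_left, antisymm_right, neg_neg]
  rw [sum_smul_ι_mul_ι_mul_ι h3 (antisymm_right a) (bianchi a), Finset.sum_comm]
  simp only [swap_pairs, Finset.sum_smul]

end CliffordContraction

theorem polar_eq_neg_inner {E : Type*} [NormedAddCommGroup E] [InnerProductSpace ℝ E]
    {Q : QuadraticForm ℝ E} (hQ : ∀ x, Q x = -(‖x‖ ^ 2 / 2)) (x y : E) :
    QuadraticMap.polar Q x y = -inner ℝ x y := by
  simp only [QuadraticMap.polar, hQ, norm_add_sq_real]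
  ring

/-- First identity of equation (4.13) in the proof of Proposition 4.7: in the
Clifford algebra of the quadratic form `Q(x) = −‖x‖²/2` on Euclidean `ℝⁿ`, with
`β_a = ι(e_a)`, a Riemann-type tensor `R` satisfies
`Σ_{b,c,d} R_{abcd} β_b β_c β_d = Σ_b Ric_{ab} β_b`. -/
theorem riemann_clifford_contraction_ricci (n : ℕ) (hn : 1 ≤ n)
    (Q : QuadraticForm ℝ (EuclideanSpace ℝ (Fin n)))
    (hQ : ∀ x : EuclideanSpace ℝ (Fin n), Q x = -(‖x‖ ^ 2 / 2))
    (β : Fin n → CliffordAlgebra Q)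
    (hβ : ∀ a, β a = CliffordAlgebra.ι Q (EuclideanSpace.single a (1 : ℝ)))
    (R : Fin n → Fin n → Fin n → Fin n → ℝ)
    (hR1 : ∀ a b c d, R a b c d = -R b a c d)
    (hR2 : ∀ a b c d, R a b c d = -R a b d c)
    (hR3 : ∀ a b c d, R a b c d = R c d a b)
    (hBianchi : ∀ a b c d, R a b c d + R a c d b + R a d b c = 0)
    (a : Fin n) :
    ∑ b, ∑ c, ∑ d, R a b c d • (β b * β c * β d)
      = ∑ b, (∑ c, R c a c b) • β b := by
  simpa [hβ, polar_eq_neg_inner hQ, EuclideanSpace.inner_single_left] using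
    riemann_clifford_contraction_ricci_general (Q := Q) (by norm_num) hR1 hR2 hBianchi
      (fun b => EuclideanSpace.single b (1 : ℝ)) a
end
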